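/- For every r > 0 and every φ ∈ [0,π/2], the matrix M(r,φ) is invertible and tr(M'(r,φ) M(r,φ)^{-1}) = (3/2) tanh(r/2) + (1/2) coth(r/2), where M'(r,φ) denotes the entrywise derivative of M with respect to the first variable. In particular this trace is independent of φ. -/

import Mathlib

/- Context: `M(t,φ)` is the 3×3 block, corresponding to the vectors `Z, P̄ξ, F̄ξ`,
of the endomorphism `D(t)` built from Jacobi fields along a geodesic normal to the
submanifold `W_w` in `ℂH^n`, for a unit normal `ξ` of Kähler angle `φ`;
`M'(r,φ) M(r,φ)⁻¹` is the corresponding block of the shape operator of the tube of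
radius `r` around `W_w`. Here `coth(r/2) = cosh(r/2)/sinh(r/2)`. -/

open Real

noncomputable section

/-- The 3×3 block `M(t,φ)` (in the basis `Z, P̄ξ, F̄ξ`) of the endomorphism `D(t)`
built from Jacobi fields along a geodesic normal to `W_w` in `ℂH^n`, for a unit
normal `ξ` of Kähler angle `φ`; the columns are the Jacobi fields `ζ_Z`,
`ζ_{P̄ξ}`, `ζ_{F̄ξ}`. -/
def M (t φ : ℝ) : Matrix (Fin 3) (Fin 3) ℝ :=
  Matrix.of
    ![![cosh (t / 2),
        -(sin φ * sinh (t / 2)),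
        0],
      ![-(sin φ * (cos φ ^ 2 + sin φ ^ 2 * cosh (t / 2)) * sinh (t / 2)),
        cos φ ^ 2 * cosh (t / 2) + sin φ ^ 2 * cosh t,
        2 * sin φ * cos φ * (cosh (t / 2) - 1) * sinh (t / 2)],
      ![-(cos φ * sin φ ^ 2 * (cosh (t / 2) - 1) * sinh (t / 2)),
        -(sin φ * cos φ * (cosh (t / 2) - cosh t)),
        2 * (1 + cos φ ^ 2 * (cosh (t / 2) - 1)) * sinh (t / 2)]]

/-- The entrywise derivative `M'(r,φ)` of `M` with respect to the first variable. -/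
def M' (r φ : ℝ) : Matrix (Fin 3) (Fin 3) ℝ :=
  Matrix.of fun i j => deriv (fun t => M t φ i j) r

/-! By Jacobi's formula `tr(M' M⁻¹)` is the logarithmic derivative of `det M(·,φ)`. A rotation of
the plane spanned by `P̄ξ` and `F̄ξ` that singles out the direction of `Jξ` simplifies `M(t,φ)`
without changing its determinant, which turns out to be `2 sinh(t/2) cosh(t/2)³`. As `φ` has
dropped out, so it does from the trace. -/

section Jacobi

variable {n : Type*} [Fintype n] [DecidableEq n]

theorem sum_det_updateRow {R : Type*} [CommRing R] (A B : Matrix n n R) :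
    ∑ i, (A.updateRow i (B i)).det = (B * A.adjugate).trace := by
  refine Finset.sum_congr rfl fun i _ ↦ ?_
  rw [← Matrix.cramer_transpose_apply, Matrix.cramer_eq_adjugate_mulVec,
    ← Matrix.adjugate_transpose, Matrix.mulVec_transpose]
  rfl

variable {𝕜 : Type*} [NontriviallyNormedField 𝕜]

theorem hasDerivAt_matrix_det {R : Type*} [NormedCommRing R] [NormedAlgebra 𝕜 R]
    {A : 𝕜 → Matrix n n R} {A' : Matrix n n R} {t : 𝕜}
    (hA : ∀ i j, HasDerivAt (fun s ↦ A s i j) (A' i j) t) :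
    HasDerivAt (fun s ↦ (A s).det) (A' * (A t).adjugate).trace t := by
  let detRows : ContinuousMultilinearMap R (fun _ : n ↦ n → R) R :=
    { (Matrix.detRowAlternating : (n → R) [⋀^n]→ₗ[R] R).toMultilinearMap with
      cont := continuous_id.matrix_det }
  have hrows : HasDerivAt (fun s i j ↦ A s i j) (fun i j ↦ A' i j) t :=
    hasDerivAt_pi.2 fun i ↦ hasDerivAt_pi.2 (hA i)
  have hdet := ((detRows.restrictScalars 𝕜).hasFDerivAt fun i j ↦ A t i j).comp_hasDerivAt t hrows
  exact hdet.congr_deriv <|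
    (ContinuousMultilinearMap.linearDeriv_apply _ _ _).trans (sum_det_updateRow (A t) A')

-- If `(A t).det = 0`, both sides are `0` by convention.
theorem trace_mul_inv_eq_logDeriv_det {K : Type*} [NontriviallyNormedField K] [NormedAlgebra 𝕜 K]
    {A : 𝕜 → Matrix n n K} {A' : Matrix n n K} {t : 𝕜}
    (hA : ∀ i j, HasDerivAt (fun s ↦ A s i j) (A' i j) t) :
    (A' * (A t)⁻¹).trace = logDeriv (fun s ↦ (A s).det) t := by
  rw [logDeriv_apply, (hasDerivAt_matrix_det hA).deriv, Matrix.inv_def, Ring.inverse_eq_inv',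
    Matrix.mul_smul, Matrix.trace_smul, smul_eq_mul, div_eq_inv_mul]

end Jacobi

/-- The rotation of the plane spanned by `P̄ξ` and `F̄ξ` whose last coordinate is the component
along `Jξ = sin φ P̄ξ + cos φ F̄ξ`. -/
def rotationToJ (φ : ℝ) : Matrix (Fin 3) (Fin 3) ℝ :=
  !![1, 0, 0; 0, cos φ, -sin φ; 0, sin φ, cos φ]

theorem det_rotationToJ (φ : ℝ) : (rotationToJ φ).det = 1 := by
  simp [rotationToJ, Matrix.det_fin_three, ← sq]

theorem rotationToJ_mul_M (t φ : ℝ) :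
    rotationToJ φ * M t φ =
      !![cosh (t / 2), -(sin φ * sinh (t / 2)), 0;
        -(sin φ * cos φ * sinh (t / 2)), cos φ * cosh (t / 2), -(2 * sin φ * sinh (t / 2));
        -(sin φ ^ 2 * sinh (t / 2) * cosh (t / 2)), sin φ * cosh t,
          2 * cos φ * sinh (t / 2) * cosh (t / 2)] := by
  have hφ := sin_sq_add_cos_sq φ
  ext i j
  fin_cases i <;> fin_cases j <;>
    simp only [rotationToJ, M, Matrix.mul_apply, Fin.sum_univ_three, Matrix.of_apply, Fin.zero_eta,
      Fin.mk_one, Fin.reduceFinMk, Matrix.cons_val] <;>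
    grind

theorem det_M (t φ : ℝ) : (M t φ).det = 2 * sinh (t / 2) * cosh (t / 2) ^ 3 := by
  have hcosh : cosh t = cosh (t / 2) ^ 2 + sinh (t / 2) ^ 2 := by
    rw [← cosh_two_mul, mul_div_cancel₀ t two_ne_zero]
  have hdet : (M t φ).det = (rotationToJ φ * M t φ).det := by
    rw [Matrix.det_mul, det_rotationToJ, one_mul]
  rw [hdet, rotationToJ_mul_M, Matrix.det_fin_three, hcosh]
  simp only [Matrix.of_apply, Matrix.cons_val]
  linear_combination (2 * sinh (t / 2) * cosh (t / 2) ^ 3 -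
    2 * sin φ ^ 2 * sinh (t / 2) ^ 3 * cosh (t / 2)) * sin_sq_add_cos_sq φ

theorem isUnit_M {t : ℝ} (ht : t ≠ 0) (φ : ℝ) : IsUnit (M t φ) := by
  have hsinh : sinh (t / 2) ≠ 0 := by simpa using ht
  rw [Matrix.isUnit_iff_isUnit_det, det_M, isUnit_iff_ne_zero]
  exact mul_ne_zero (mul_ne_zero two_ne_zero hsinh) (pow_ne_zero 3 (cosh_pos _).ne')

theorem hasDerivAt_M_apply (r φ : ℝ) (i j : Fin 3) :
    HasDerivAt (fun t ↦ M t φ i j) (M' r φ i j) r := by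
  refine DifferentiableAt.hasDerivAt ?_
  fin_cases i <;> fin_cases j <;>
    simp only [M, Matrix.of_apply, Fin.zero_eta, Fin.mk_one, Fin.reduceFinMk, Matrix.cons_val] <;>
    fun_prop

theorem logDeriv_det_M {r : ℝ} (hr : r ≠ 0) (φ : ℝ) :
    logDeriv (fun t ↦ (M t φ).det) r =
      3 / 2 * tanh (r / 2) + 1 / 2 * (cosh (r / 2) / sinh (r / 2)) := by
  have hsinh : sinh (r / 2) ≠ 0 := by simpa using hr
  have hcosh : cosh (r / 2) ≠ 0 := (cosh_pos _).ne'
  have hhalf : HasDerivAt (fun t : ℝ ↦ t / 2) (1 / 2) r := (hasDerivAt_id r).div_const 2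
  simp only [det_M]
  rw [logDeriv_apply, ((hhalf.sinh.const_mul 2).fun_mul (hhalf.cosh.fun_pow 3)).deriv,
    tanh_eq_sinh_div_cosh]
  field_simp
  push_cast
  ring

theorem trace_block_general {r : ℝ} (hr : r ≠ 0) (φ : ℝ) :
    IsUnit (M r φ) ∧
    Matrix.trace (M' r φ * (M r φ)⁻¹)
      = 3 / 2 * tanh (r / 2) + 1 / 2 * (cosh (r / 2) / sinh (r / 2)) := by
  refine ⟨isUnit_M hr φ, ?_⟩
  rw [trace_mul_inv_eq_logDeriv_det (hasDerivAt_M_apply r φ), logDeriv_det_M hr]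

/-- for every `r > 0` and every `φ ∈ [0,π/2]`, the matrix `M(r,φ)`
is invertible and `tr(M'(r,φ) M(r,φ)⁻¹) = (3/2) tanh(r/2) + (1/2) coth(r/2)`.
In particular this trace is independent of `φ`. -/
theorem trace_block (r : ℝ) (hr : 0 < r) (φ : ℝ) (hφ : φ ∈ Set.Icc 0 (π / 2)) :
    IsUnit (M r φ) ∧
    Matrix.trace (M' r φ * (M r φ)⁻¹)
      = 3 / 2 * tanh (r / 2) + 1 / 2 * (cosh (r / 2) / sinh (r / 2)) :=
  trace_block_general hr.ne' φ
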